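/- Let λ be an infinite cardinal, S a family of subsets of λ, and α an ordinal with α < λ. If |{A ∩ α : A ∈ S}| ≥ (ded λ)⁺, then 2^{|α|} > λ. Consequently, if in addition κ is an infinite cardinal with λ ≥ ℶ₃(κ), then |α| > ℶ₂(κ). -/

import Mathlib

open Cardinal

/-- `B` is a branch of length `μ` of the tree `(T, r)`: a downward-closed set that is
enumerated, in increasing `r`-order, by a function from (the canonical type of order
type) `μ`. -/
def IsBranchOfLength {T : Type} (r : T → T → Prop) (μ : Cardinal.{0}) (B : Set T) : Prop :=
  (∀ x ∈ B, ∀ y, r y x → y ∈ B) ∧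
  ∃ f : μ.ord.ToType → T, (∀ i j, i < j → r (f i) (f j)) ∧ Set.range f = B

/-- `ded λ`: the supremum of the set of cardinals `κ` for which there exist a regular
cardinal `μ` and a tree (a strict order in which the set of predecessors of every node
is well-ordered) with at most `λ` nodes and `κ` branches of length `μ`. -/
noncomputable def ded (lam : Cardinal.{0}) : Cardinal.{0} :=
  sSup { k : Cardinal.{0} |
    ∃ μ : Cardinal.{0}, μ.IsRegular ∧
      ∃ (T : Type) (r : T → T → Prop),
        IsStrictOrder T r ∧
        (∀ x : T, IsWellOrder {y // r y x} fun a b => r a.1 b.1) ∧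
        Cardinal.mk T ≤ lam ∧
        k = Cardinal.mk {B : Set T // IsBranchOfLength r μ B} }

/-
The traces on `α` are subsets of `α`, so there are at most `2 ^ |α|` of them. On the other hand
`λ ≤ ded λ`: the disjoint union of `λ` copies of `ω` is a tree with `λ` nodes in which each copy is
a branch of length `ω`. Hence `λ ≤ ded λ < 2 ^ |α|`, and the bound on `|α|` follows because
`ν ↦ 2 ^ ν` is monotone.
-/

theorem isWellOrder_lt_sigma {ι : Type*} {α : ι → Type*} [∀ i, LinearOrder (α i)]
    [∀ i, WellFoundedLT (α i)] (x : Σ i, α i) :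
    IsWellOrder {y // y < x} fun y z => y.1 < z.1 := by
  obtain ⟨i, a⟩ := x
  let fiber : ((· < ·) : Set.Iio a → Set.Iio a → Prop) ↪r
      fun y z : {y : Σ i, α i // y < ⟨i, a⟩} => y.1 < z.1 :=
    { toFun := fun b => ⟨⟨i, b⟩, Sigma.mk_lt_mk_iff.2 b.2⟩
      inj' := fun b c h => Subtype.ext (sigma_mk_injective (congrArg Subtype.val h))
      map_rel_iff' := Sigma.mk_lt_mk_iff }
  have fiber_surjective : Function.Surjective fiber := by
    rintro ⟨_, ⟨_, b, _, hb⟩⟩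
    exact ⟨⟨b, hb⟩, rfl⟩
  exact (RelIso.ofSurjective fiber fiber_surjective).symm.toRelEmbedding.isWellOrder

theorem isBranchOfLength_range_sigmaMk {ι : Type} (μ : Cardinal.{0}) (i : ι) :
    IsBranchOfLength (T := Σ _ : ι, μ.ord.ToType) (· < ·) μ (Set.range (Sigma.mk i)) := by
  refine ⟨?_, fun b => ⟨i, b⟩, fun _ _ hbc => Sigma.mk_lt_mk_iff.2 hbc, rfl⟩
  rintro _ ⟨b, rfl⟩ _ ⟨_, c, _, _⟩
  exact ⟨c, rfl⟩

theorem mk_le_mk_isBranchOfLength_sigma (ι : Type) {μ : Cardinal.{0}} (hμ : μ ≠ 0) :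
    #ι ≤ #{B : Set (Σ _ : ι, μ.ord.ToType) // IsBranchOfLength (· < ·) μ B} := by
  obtain ⟨b⟩ : Nonempty μ.ord.ToType := by rwa [← mk_ne_zero_iff, mk_ord_toType]
  let fiber (i : ι) : {B : Set (Σ _ : ι, μ.ord.ToType) // IsBranchOfLength (· < ·) μ B} :=
    ⟨Set.range (Sigma.mk i), isBranchOfLength_range_sigmaMk μ i⟩
  refine mk_le_of_injective (f := fiber) fun i j hij => ?_
  have range_eq : Set.range (Sigma.mk i) = Set.range (Sigma.mk j) := congrArg Subtype.val hij
  obtain ⟨_, hc⟩ := range_eq.subset (Set.mem_range_self b)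
  exact (congrArg Sigma.fst hc).symm

theorem mk_isBranchOfLength_le_ded {lam μ : Cardinal.{0}} (hμ : μ.IsRegular) {T : Type}
    (r : T → T → Prop) [IsStrictOrder T r]
    (hr : ∀ x : T, IsWellOrder {y // r y x} fun a b => r a.1 b.1) (hT : #T ≤ lam) :
    #{B : Set T // IsBranchOfLength r μ B} ≤ ded lam := by
  -- `sSup` of an unbounded set of cardinals would be `0`.
  refine le_csSup ⟨2 ^ lam, ?_⟩ ⟨μ, hμ, T, r, inferInstance, hr, hT, rfl⟩
  rintro _ ⟨ν, _, U, s, _, _, hU, rfl⟩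
  calc #{B : Set U // IsBranchOfLength s ν B}
      ≤ #(Set U) := mk_subtype_le _
    _ = 2 ^ #U := mk_set
    _ ≤ 2 ^ lam := power_le_power_left two_ne_zero hU

theorem le_ded {lam : Cardinal.{0}} (hlam : ℵ₀ ≤ lam) : lam ≤ ded lam := by
  have mk_tree : #(Σ _ : lam.out, (ℵ₀ : Cardinal.{0}).ord.ToType) = lam := by
    simp [mul_aleph0_eq hlam]
  calc lam
      = #lam.out := (mk_out lam).symm
    _ ≤ #{B : Set (Σ _ : lam.out, (ℵ₀ : Cardinal.{0}).ord.ToType) //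
          IsBranchOfLength (· < ·) ℵ₀ B} :=
      mk_le_mk_isBranchOfLength_sigma lam.out aleph0_ne_zero
    _ ≤ ded lam :=
      mk_isBranchOfLength_le_ded isRegular_aleph0 _ isWellOrder_lt_sigma mk_tree.le

theorem mk_traces_le {X : Type*} (S : Set (Set X)) (s : Set X) :
    #{A : Set X | ∃ B ∈ S, A = B ∩ s} ≤ 2 ^ #s := by
  rw [← mk_powerset]
  refine mk_le_mk_of_subset ?_
  rintro _ ⟨B, _, rfl⟩
  exact Set.inter_subset_right

theorem stmt1_general {lam : Cardinal.{0}} (hlam : ℵ₀ ≤ lam) {X : Type} (S : Set (Set X))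
    (s : Set X) (h : Order.succ (ded lam) ≤ #{A : Set X | ∃ B ∈ S, A = B ∩ s}) :
    lam < 2 ^ #s ∧ ∀ κ : Cardinal.{0},
      (2 : Cardinal.{0}) ^ ((2 : Cardinal.{0}) ^ ((2 : Cardinal.{0}) ^ κ)) ≤ lam →
        (2 : Cardinal.{0}) ^ ((2 : Cardinal.{0}) ^ κ) < #s := by
  have lam_lt : lam < 2 ^ #s :=
    calc lam
        ≤ ded lam := le_ded hlam
      _ < #{A : Set X | ∃ B ∈ S, A = B ∩ s} := Order.succ_le_iff.1 h
      _ ≤ 2 ^ #s := mk_traces_le S s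
  have two_power_mono : Monotone fun ν : Cardinal.{0} => (2 : Cardinal.{0}) ^ ν :=
    fun _ _ => power_le_power_left two_ne_zero
  exact ⟨lam_lt, fun _ hκ => two_power_mono.reflect_lt (hκ.trans_lt lam_lt)⟩

/-- If `S` is a family of subsets of `λ`, `α < λ` (represented by the element `a` of the
canonical type of `λ`, whose set of predecessors `Set.Iio a` has cardinality `|α|`), and
the family of traces `{A ∩ α : A ∈ S}` has cardinality at least `(ded λ)⁺`, then
`2^{|α|} > λ`; consequently, for any infinite `κ` with `λ ≥ ℶ₃(κ)` we get `|α| > ℶ₂(κ)`. -/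
theorem stmt1 (lam : Cardinal.{0}) (hlam : ℵ₀ ≤ lam)
    (S : Set (Set lam.ord.ToType)) (a : lam.ord.ToType)
    (h : Order.succ (ded lam) ≤
      Cardinal.mk ↥{A : Set lam.ord.ToType | ∃ B ∈ S, A = B ∩ Set.Iio a}) :
    lam < (2:Cardinal.{0}) ^ Cardinal.mk ↥(Set.Iio a) ∧
      ∀ κ : Cardinal.{0}, ℵ₀ ≤ κ → ((2:Cardinal.{0}) ^ ((2:Cardinal.{0}) ^ ((2:Cardinal.{0}) ^ κ))) ≤ lam →
        ((2:Cardinal.{0}) ^ ((2:Cardinal.{0}) ^ κ)) < Cardinal.mk ↥(Set.Iio a) := by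
  obtain ⟨lam_lt, lt_mk⟩ := stmt1_general hlam S (Set.Iio a) h
  exact ⟨lam_lt, fun κ _ => lt_mk κ⟩
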